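/- Let F be a Ferrers diagram of semiperimeter n+1 and T ∈ EWtab(F). Then for every j ∈ {1,…,n}, ν_j(T) = μ_j(φ_TC(T)). -/

import Mathlib

open Classical

/-- A Ferrers diagram of semiperimeter `n + 1`, encoded by the set of its row labels
(labels `0, …, n` run along the south-east border; `0` labels the top row and the
last label `n` is a column label). -/
structure Ferrers (n : ℕ) where
  rows : Finset (Fin (n + 1))
  zero_mem : 0 ∈ rows
  last_not_mem : Fin.last n ∉ rows

namespace Ferrers

/-- `(i, j)` is a cell of the diagram: `i` is a row label, `j` a column label, `i < j`. -/
def Cell {n : ℕ} (F : Ferrers n) (i j : Fin (n + 1)) : Prop :=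
  i ∈ F.rows ∧ j ∉ F.rows ∧ i < j

/-- Adjacency in the Ferrers graph `G(F)`. -/
def Adj {n : ℕ} (F : Ferrers n) (u v : Fin (n + 1)) : Prop :=
  F.Cell u v ∨ F.Cell v u

/-- Degree of a vertex in `G(F)`. -/
noncomputable def deg {n : ℕ} (F : Ferrers n) (v : Fin (n + 1)) : ℕ :=
  {u | F.Adj v u}.ncard

/-- Toppling a single vertex.  The height at the sink `0` is kept equal to `c 0`
(grains sent to the sink vanish); toppling the sink sends one grain to each of
its neighbours. -/
noncomputable def topple {n : ℕ} (F : Ferrers n) (c : Fin (n + 1) → ℕ)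
    (v : Fin (n + 1)) : Fin (n + 1) → ℕ :=
  fun u =>
    if u = 0 then c 0
    else if u = v then c v - F.deg v
    else if F.Adj v u then c u + 1
    else c u

/-- Toppling the vertices of a list in order. -/
noncomputable def toppleList {n : ℕ} (F : Ferrers n) (c : Fin (n + 1) → ℕ)
    (l : List (Fin (n + 1))) : Fin (n + 1) → ℕ :=
  l.foldl F.topple c

/-- Simultaneous toppling of a set of vertices. -/
noncomputable def toppleSet {n : ℕ} (F : Ferrers n) (c : Fin (n + 1) → ℕ)
    (S : Set (Fin (n + 1))) : Fin (n + 1) → ℕ :=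
  fun u =>
    if u = 0 then c 0
    else c u + {w ∈ S | F.Adj w u}.ncard - if u ∈ S then F.deg u else 0

/-- A configuration is stable if every non-sink vertex has fewer grains than its degree. -/
def Stable {n : ℕ} (F : Ferrers n) (c : Fin (n + 1) → ℕ) : Prop :=
  ∀ v, v ≠ 0 → c v < F.deg v

/-- A Dhar (burning) ordering for `c`: an ordering `v₀ = 0, v₁, …, vₙ` of all the
vertices such that each `vᵢ` (`i ≥ 1`) is unstable after toppling `v₀, …, v_{i-1}`. -/
def DharSeq {n : ℕ} (F : Ferrers n) (c : Fin (n + 1) → ℕ) (l : List (Fin (n + 1))) : Prop :=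
  l.length = n + 1 ∧ l.Nodup ∧ l.head? = some 0 ∧
    ∀ i, ∀ h : i < l.length, 1 ≤ i →
      F.deg (l.get ⟨i, h⟩) ≤ F.toppleList c (l.take i) (l.get ⟨i, h⟩)

/-- Recurrent configurations (via Dhar's criterion).  The height at the sink is
normalised to `0`. -/
def Recurrent {n : ℕ} (F : Ferrers n) (c : Fin (n + 1) → ℕ) : Prop :=
  c 0 = 0 ∧ F.Stable c ∧ ∃ l, F.DharSeq c l

/-- Minimal recurrent configurations: recurrent with minimal total number of grains. -/
def RecMin {n : ℕ} (F : Ferrers n) (c : Fin (n + 1) → ℕ) : Prop :=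
  F.Recurrent c ∧ ∀ c', F.Recurrent c' → (∑ v, c v) ≤ ∑ v, c' v

/-- Canonical toppling: block `0` is `{0}` (the sink); from then on, blocks with odd
index are the sets of currently unstable column vertices and blocks with even index
the sets of currently unstable row vertices.  The first component is the configuration
just before toppling the block recorded in the second component. -/
noncomputable def canonAux {n : ℕ} (F : Ferrers n) (c : Fin (n + 1) → ℕ) :
    ℕ → ((Fin (n + 1) → ℕ) × Set (Fin (n + 1)))
  | 0 => (c, {0})
  | k + 1 =>
    let c' := F.toppleSet (canonAux F c k).1 (canonAux F c k).2
    (c', {v | v ≠ 0 ∧ (if k % 2 = 0 then v ∉ F.rows else v ∈ F.rows) ∧ F.deg v ≤ c' v})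

/-- The `k`-th block of the canonical toppling of `c`:
`canonTop F c 0 = U⁰ = {0}`, `canonTop F c (2i-1) = Vⁱ`, `canonTop F c (2i) = Uⁱ`. -/
noncomputable def canonTop {n : ℕ} (F : Ferrers n) (c : Fin (n + 1) → ℕ) (k : ℕ) :
    Set (Fin (n + 1)) :=
  (F.canonAux c k).2

/-- The configuration just before toppling the `k`-th block of the canonical toppling. -/
noncomputable def canonConfig {n : ℕ} (F : Ferrers n) (c : Fin (n + 1) → ℕ) (k : ℕ) :
    Fin (n + 1) → ℕ :=
  (F.canonAux c k).1

/-- The index of the block of the canonical toppling of `c` containing `v`. -/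
noncomputable def bIdx {n : ℕ} (F : Ferrers n) (c : Fin (n + 1) → ℕ) (v : Fin (n + 1)) : ℕ :=
  sInf {k | v ∈ F.canonTop c k}

/-- `T` is a EW-tableau on `F` (entries of non-cells are normalised to `false`):
the top row contains only `1`s, every other row contains a `0`, and there is no
rectangle with two diagonally opposite `0`s and two `1`s in the other corners. -/
def IsEW {n : ℕ} (F : Ferrers n) (T : Fin (n + 1) → Fin (n + 1) → Bool) : Prop :=
  (∀ i j, ¬F.Cell i j → T i j = false) ∧
  (∀ j, F.Cell 0 j → T 0 j = true) ∧
  (∀ i, i ∈ F.rows → i ≠ 0 → ∃ j, F.Cell i j ∧ T i j = false) ∧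
  (∀ i i' j j', F.Cell i j → F.Cell i j' → F.Cell i' j → F.Cell i' j' →
    T i j = T i' j' → T i j' = T i' j → T i j = T i j')

/-- The configuration associated to a tableau: row vertices count the `1`s in their
row, column vertices count the `0`s in their column (the sink is normalised to `0`). -/
noncomputable def phiTC {n : ℕ} (F : Ferrers n) (T : Fin (n + 1) → Fin (n + 1) → Bool) :
    Fin (n + 1) → ℕ :=
  fun v =>
    if v = 0 then 0
    else if v ∈ F.rows then {j | F.Cell v j ∧ T v j = true}.ncard
    else {i | F.Cell i v ∧ T i v = false}.ncard

/-- The tableau associated to a (minimal recurrent) configuration: a cell `(i, j)`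
gets a `1` exactly when `i` lies in an earlier block than `j` in the canonical
toppling of `c`. -/
noncomputable def phiCT {n : ℕ} (F : Ferrers n) (c : Fin (n + 1) → ℕ) :
    Fin (n + 1) → Fin (n + 1) → Bool :=
  fun i j => if F.Cell i j ∧ F.bIdx c i < F.bIdx c j then true else false

/-- The supplementary tableau of `T`: `S i j = 1` exactly when the row vertex `i`
lies in an earlier block than the column vertex `j` in `CanonTop (φ_TC T)`. -/
noncomputable def suppS {n : ℕ} (F : Ferrers n) (T : Fin (n + 1) → Fin (n + 1) → Bool)
    (i j : Fin (n + 1)) : Bool :=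
  if F.bIdx (F.phiTC T) i < F.bIdx (F.phiTC T) j then true else false

/-- The entry of `T` in cell `(j, k)` is a cornersupport entry. -/
def Cornersupport {n : ℕ} (F : Ferrers n) (T : Fin (n + 1) → Fin (n + 1) → Bool)
    (j k : Fin (n + 1)) : Prop :=
  ∃ j' k', j' ∈ F.rows ∧ k' ∉ F.rows ∧ j' ≠ j ∧ k' ≠ k ∧
    F.suppS T j' k' = !(T j k) ∧ F.suppS T j' k = T j k ∧ F.suppS T j k' = T j k

/-- `ν_v(T)`: the number of non-cornersupport `0`s in row `v` (if `v` is a row label),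
resp. non-cornersupport `1`s in column `v` (if `v` is a column label). -/
noncomputable def nu {n : ℕ} (F : Ferrers n) (T : Fin (n + 1) → Fin (n + 1) → Bool)
    (v : Fin (n + 1)) : ℕ :=
  if v ∈ F.rows then {k | F.Cell v k ∧ T v k = false ∧ ¬F.Cornersupport T v k}.ncard
  else {i | F.Cell i v ∧ T i v = true ∧ ¬F.Cornersupport T i v}.ncard

/-- `μ_v(c)`: if `v ∈ Uⁱ`, the number of `k ∈ Vⁱ` with `k > v`; if `v ∈ Vⁱ`,
the number of `k ∈ U^{i-1}` with `k < v`.  In both cases the relevant block is the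
one immediately preceding the block of `v`. -/
noncomputable def mu {n : ℕ} (F : Ferrers n) (c : Fin (n + 1) → ℕ) (v : Fin (n + 1)) : ℕ :=
  if v ∈ F.rows then {k | v < k ∧ k ∈ F.canonTop c (F.bIdx c v - 1)}.ncard
  else {k | k < v ∧ k ∈ F.canonTop c (F.bIdx c v - 1)}.ncard

/-- The minimal recurrent configuration with the same canonical toppling as `c`:
if `j ∈ Uⁱ` then `minrec c j = |{ℓ ∈ Vᵏ : j < ℓ, k > i}|`, and if `j ∈ Vⁱ` then
`minrec c j = |{ℓ ∈ Uᵏ : ℓ < j, k ≥ i}|` (blocks `Vᵏ` sit at odd index `2k - 1`,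
blocks `Uᵏ` at even index `2k`). -/
noncomputable def minrecFun {n : ℕ} (F : Ferrers n) (c : Fin (n + 1) → ℕ) :
    Fin (n + 1) → ℕ :=
  fun j =>
    if j = 0 then 0
    else if j ∈ F.rows then
      {l | j < l ∧ ∃ k, F.bIdx c j < 2 * k + 1 ∧ l ∈ F.canonTop c (2 * k + 1)}.ncard
    else
      {l | l < j ∧ ∃ k, F.bIdx c j < 2 * k ∧ l ∈ F.canonTop c (2 * k)}.ncard

/-- The number of edges of `G(F)` (equivalently, the number of cells of `F`). -/
noncomputable def edgeCount {n : ℕ} (F : Ferrers n) : ℕ :=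
  {p : Fin (n + 1) × Fin (n + 1) | F.Cell p.1 p.2}.ncard

/-! Read a tableau `T` as an orientation of `G(F)`, so that `φ_TC(T)` assigns to each vertex its
out-degree.  The EW conditions make this orientation acyclic with unique source `0`: in a nonempty
set where every vertex has an in-neighbour, let `i` be the lowest row and `r → k → i` a path in the
set; the rectangle rule gives `r → j` whenever `i → j`, so `i` can be discarded.

Conservation of grains shows that a vertex becomes unstable exactly when all its in-neighbours have
toppled.  Hence its block index, its level, is one more than the largest level of an in-neighbour;
levels strictly increase along arcs, rows sit at even levels and columns at odd ones, and no level
below an occupied one is empty.  A cornersupport entry is an arc `u → v` for which levels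
`u < x < y < v` are realised by some `x` on the side of `v` and `y` on the side of `u`, and by
parity such `x` and `y` exist unless `v` is exactly one level above `u`.  So `ν_v(T)` and
`μ_v(φ_TC(T))` both count the in-neighbours of `v` one level below it. -/

/-- A filling `T` read as an orientation of `G(F)`: a `1` orients its edge from the row to the
column, a `0` from the column to the row. -/
def Arc {n : ℕ} (F : Ferrers n) (T : Fin (n + 1) → Fin (n + 1) → Bool)
    (u v : Fin (n + 1)) : Prop :=
  (F.Cell u v ∧ T u v = true) ∨ (F.Cell v u ∧ T v u = false)

/-- The sink `0` of the sandpile is the only source of the orientation given by `T`. -/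
def HasUniqueSource {n : ℕ} (F : Ferrers n) (T : Fin (n + 1) → Fin (n + 1) → Bool) : Prop :=
  ∀ v, (∃ u, F.Arc T u v) ↔ v ≠ 0

/-- The odometer of the canonical toppling of `c`: how often `v` occurs in the blocks with index
less than `k`. -/
noncomputable def odometer {n : ℕ} (F : Ferrers n) (c : Fin (n + 1) → ℕ) (k : ℕ)
    (v : Fin (n + 1)) : ℕ :=
  Nat.count (fun m => v ∈ F.canonTop c m) k

/-- The toppling counts `t` respect the orientation given by `T`: no vertex has toppled twice, and
a vertex has toppled only if all its in-neighbours have. -/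
structure RespectsArcs {n : ℕ} (F : Ferrers n) (T : Fin (n + 1) → Fin (n + 1) → Bool)
    (t : Fin (n + 1) → ℕ) : Prop where
  le_one : ∀ v, t v ≤ 1
  le_of_arc : ∀ u v, F.Arc T u v → t v ≤ t u

/-- The index of the block of `CanonTop (φ_TC T)` containing `v`.  For an EW-tableau this is the
length of a longest directed path from `0` to `v`. -/
noncomputable def level {n : ℕ} (F : Ferrers n) (T : Fin (n + 1) → Fin (n + 1) → Bool)
    (v : Fin (n + 1)) : ℕ :=
  F.bIdx (F.phiTC T) v

section

variable {n : ℕ} {F : Ferrers n}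

/-! ### Canonical toppling of an arbitrary configuration -/

theorem canonConfig_succ (c : Fin (n + 1) → ℕ) (k : ℕ) :
    F.canonConfig c (k + 1) = F.toppleSet (F.canonConfig c k) (F.canonTop c k) :=
  rfl

theorem mem_canonTop_zero {c : Fin (n + 1) → ℕ} {v : Fin (n + 1)} :
    v ∈ F.canonTop c 0 ↔ v = 0 :=
  Iff.rfl

theorem mem_canonTop_succ {c : Fin (n + 1) → ℕ} {k : ℕ} {v : Fin (n + 1)} :
    v ∈ F.canonTop c (k + 1) ↔
      v ≠ 0 ∧ (v ∈ F.rows ↔ ¬Even k) ∧ F.deg v ≤ F.canonConfig c (k + 1) v := by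
  change v ≠ 0 ∧ (if k % 2 = 0 then v ∉ F.rows else v ∈ F.rows) ∧ _ ↔ _
  by_cases hk : Even k
  · simp [hk, Nat.even_iff.1 hk, canonConfig, canonAux]
  · simp [hk, Nat.even_iff.not.1 hk, canonConfig, canonAux]

theorem mem_rows_iff_even_of_mem_canonTop {c : Fin (n + 1) → ℕ} {k : ℕ} {v : Fin (n + 1)}
    (hv : v ∈ F.canonTop c k) : v ∈ F.rows ↔ Even k := by
  cases k with
  | zero => simp [mem_canonTop_zero.1 hv, F.zero_mem]
  | succ k => rw [Nat.even_add_one, (mem_canonTop_succ.1 hv).2.1]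

theorem deg_le_canonConfig_of_mem_canonTop {c : Fin (n + 1) → ℕ} {k : ℕ} {v : Fin (n + 1)}
    (h0 : v ≠ 0) (hv : v ∈ F.canonTop c k) : F.deg v ≤ F.canonConfig c k v := by
  cases k with
  | zero => exact absurd (mem_canonTop_zero.1 hv) h0
  | succ k => exact (mem_canonTop_succ.1 hv).2.2

theorem odometer_zero (c : Fin (n + 1) → ℕ) (v : Fin (n + 1)) : F.odometer c 0 v = 0 :=
  Nat.count_zero _

theorem odometer_succ (c : Fin (n + 1) → ℕ) (k : ℕ) (v : Fin (n + 1)) :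
    F.odometer c (k + 1) v = F.odometer c k v + if v ∈ F.canonTop c k then 1 else 0 :=
  Nat.count_succ _ _

theorem odometer_eq_zero_iff {c : Fin (n + 1) → ℕ} {k : ℕ} {v : Fin (n + 1)} :
    F.odometer c k v = 0 ↔ ∀ m < k, v ∉ F.canonTop c m :=
  Nat.count_iff_forall_not

theorem odometer_pos_iff {c : Fin (n + 1) → ℕ} {k : ℕ} {v : Fin (n + 1)} :
    0 < F.odometer c k v ↔ ∃ m < k, v ∈ F.canonTop c m := by
  rw [Nat.pos_iff_ne_zero, Ne, odometer_eq_zero_iff]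
  push Not
  rfl

theorem canonConfig_add_odometer_mul_deg (c : Fin (n + 1) → ℕ) (k : ℕ) {v : Fin (n + 1)}
    (hv : v ≠ 0) :
    F.canonConfig c k v + F.odometer c k v * F.deg v =
      c v + ∑ w with F.Adj w v, F.odometer c k w := by
  induction k with
  | zero => simp [odometer_zero, canonConfig, canonAux]
  | succ k ih =>
    have hreceived : {w ∈ F.canonTop c k | F.Adj w v}.ncard =
        ∑ w with F.Adj w v, if w ∈ F.canonTop c k then 1 else 0 := by
      rw [Finset.sum_boole, Finset.filter_filter, Nat.cast_id, ← Set.ncard_coe_finset]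
      simp [and_comm]
    simp only [canonConfig_succ, toppleSet, if_neg hv, odometer_succ, Finset.sum_add_distrib,
      ← hreceived]
    split_ifs with hmem
    · -- A vertex topples only when unstable, so the subtraction in `toppleSet` is not truncated.
      have := deg_le_canonConfig_of_mem_canonTop hv hmem
      rw [add_one_mul]
      omega
    · rw [add_zero]
      omega

variable {T : Fin (n + 1) → Fin (n + 1) → Bool} {u v : Fin (n + 1)}

/-! ### Fillings as orientations -/

theorem arc_iff_of_mem_rows (hv : v ∈ F.rows) : F.Arc T u v ↔ F.Cell v u ∧ T v u = false :=
  or_iff_right fun h => h.1.2.1 hv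

theorem arc_iff_of_notMem_rows (hv : v ∉ F.rows) : F.Arc T u v ↔ F.Cell u v ∧ T u v = true :=
  or_iff_left fun h => hv h.1.1

theorem Arc.mem_rows_iff (h : F.Arc T u v) : u ∈ F.rows ↔ v ∉ F.rows := by
  rcases h with ⟨⟨hu, hv, -⟩, -⟩ | ⟨⟨hv, hu, -⟩, -⟩ <;> tauto

theorem Arc.asymm (h : F.Arc T u v) : ¬F.Arc T v u := by
  by_cases hv : v ∈ F.rows
  · rw [arc_iff_of_notMem_rows fun hu => h.mem_rows_iff.1 hu hv,
      ((arc_iff_of_mem_rows hv).1 h).2]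
    simp
  · rw [arc_iff_of_mem_rows (h.mem_rows_iff.2 hv), ((arc_iff_of_notMem_rows hv).1 h).2]
    simp

theorem adj_iff_arc_or_arc : F.Adj u v ↔ F.Arc T u v ∨ F.Arc T v u := by
  grind [Adj, Arc]

theorem sum_adj_eq_sum_arc_add_sum_arc {M : Type*} [AddCommMonoid M]
    (T : Fin (n + 1) → Fin (n + 1) → Bool) (v : Fin (n + 1)) (f : Fin (n + 1) → M) :
    ∑ w with F.Adj w v, f w = ∑ w with F.Arc T w v, f w + ∑ w with F.Arc T v w, f w := by
  rw [← Finset.sum_union (Finset.disjoint_filter.2 fun _ _ => Arc.asymm), ← Finset.filter_or]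
  simp only [adj_iff_arc_or_arc (T := T)]

theorem deg_eq_sum_adj (v : Fin (n + 1)) : F.deg v = ∑ w with F.Adj w v, 1 := by
  rw [deg, ← Finset.card_eq_sum_ones, ← Set.ncard_coe_finset]
  simp [Adj, or_comm]

theorem phiTC_eq_sum_arc (hv : v ≠ 0) : F.phiTC T v = ∑ w with F.Arc T v w, 1 := by
  rw [← Finset.card_eq_sum_ones, ← Set.ncard_coe_finset, phiTC, if_neg hv]
  split_ifs with hrow <;> congr 1 <;> ext w <;> simp [Arc, Cell, hrow]

/-! ### Canonical toppling follows the orientation -/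

theorem HasUniqueSource.phiTC_lt_deg (hs : F.HasUniqueSource T) (hv : v ≠ 0) :
    F.phiTC T v < F.deg v := by
  have hpos : 0 < ∑ w with F.Arc T w v, 1 := by
    rw [← Finset.card_eq_sum_ones, Finset.card_pos]
    simpa [Finset.filter_nonempty_iff] using (hs v).2 hv
  rw [deg_eq_sum_adj, sum_adj_eq_sum_arc_add_sum_arc T, ← phiTC_eq_sum_arc hv]
  omega

theorem HasUniqueSource.deg_le_canonConfig_iff (hs : F.HasUniqueSource T) {k : ℕ}
    (ht : F.RespectsArcs T (F.odometer (F.phiTC T) k)) (hv : v ≠ 0) :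
    F.deg v ≤ F.canonConfig (F.phiTC T) k v ↔
      F.odometer (F.phiTC T) k v = 0 ∧ ∀ u, F.Arc T u v → F.odometer (F.phiTC T) k u = 1 := by
  have hcons := canonConfig_add_odometer_mul_deg (F := F) (F.phiTC T) k hv
  generalize F.odometer (F.phiTC T) k = t at ht hcons ⊢
  rcases Nat.le_one_iff_eq_zero_or_eq_one.1 (ht.le_one v) with htv | htv
  · have hout : ∑ w with F.Arc T v w, t w = 0 := Finset.sum_eq_zero fun w hw =>
      Nat.le_zero.1 (htv ▸ ht.le_of_arc v w (Finset.mem_filter.1 hw).2)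
    have hle : ∀ u ∈ Finset.univ.filter (F.Arc T · v), t u ≤ 1 := fun u _ => ht.le_one u
    have hsum : (∀ u, F.Arc T u v → t u = 1) ↔
        ∑ w with F.Arc T w v, t w = ∑ w with F.Arc T w v, 1 := by
      simp only [Finset.sum_eq_sum_iff_of_le hle, Finset.mem_filter, Finset.mem_univ, true_and]
    have hsum_le := Finset.sum_le_sum hle
    have hdeg := deg_eq_sum_adj (F := F) v
    rw [sum_adj_eq_sum_arc_add_sum_arc T, ← phiTC_eq_sum_arc hv] at hdeg
    rw [sum_adj_eq_sum_arc_add_sum_arc T, hout, htv] at hcons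
    rw [hsum]
    omega
  · have hsum_le : ∑ w with F.Adj w v, t w ≤ F.deg v :=
      (deg_eq_sum_adj (F := F) v).symm ▸ Finset.sum_le_sum fun w _ => ht.le_one w
    have hstable := hs.phiTC_lt_deg hv
    rw [htv] at hcons ⊢
    omega

theorem HasUniqueSource.odometer_of_mem_canonTop_of_respectsArcs (hs : F.HasUniqueSource T)
    {k : ℕ} (ht : F.RespectsArcs T (F.odometer (F.phiTC T) k))
    (hv : v ∈ F.canonTop (F.phiTC T) k) :
    F.odometer (F.phiTC T) k v = 0 ∧ ∀ u, F.Arc T u v → F.odometer (F.phiTC T) k u = 1 := by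
  by_cases h0 : v = 0
  · subst h0
    have hnot : ∀ u, ¬F.Arc T u 0 := fun u hu => (hs 0).1 ⟨u, hu⟩ rfl
    cases k with
    | zero => exact ⟨odometer_zero _ _, fun u hu => absurd hu (hnot u)⟩
    | succ k => exact absurd rfl (mem_canonTop_succ.1 hv).1
  · exact (hs.deg_le_canonConfig_iff ht h0).1 (deg_le_canonConfig_of_mem_canonTop h0 hv)

theorem HasUniqueSource.respectsArcs_odometer (hs : F.HasUniqueSource T) (k : ℕ) :
    F.RespectsArcs T (F.odometer (F.phiTC T) k) := by
  induction k with
  | zero => exact ⟨by simp [odometer_zero], by simp [odometer_zero]⟩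
  | succ k ih =>
    have hblock := fun v => hs.odometer_of_mem_canonTop_of_respectsArcs (v := v) ih
    refine ⟨fun v => ?_, fun u v huv => ?_⟩
    · rw [odometer_succ]
      split_ifs with hv
      · rw [(hblock v hv).1]
      · exact ih.le_one v
    · simp only [odometer_succ]
      by_cases hv : v ∈ F.canonTop (F.phiTC T) k
      · rw [if_pos hv, (hblock v hv).1, (hblock v hv).2 u huv]
        omega
      · rw [if_neg hv]
        exact (ih.le_of_arc u v huv).trans (Nat.le_add_right _ _)

theorem HasUniqueSource.notMem_canonTop_of_lt (hs : F.HasUniqueSource T) {k m : ℕ} (hm : m < k)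
    (hv : v ∈ F.canonTop (F.phiTC T) k) : v ∉ F.canonTop (F.phiTC T) m := fun hvm =>
  (odometer_pos_iff.2 ⟨m, hm, hvm⟩).ne'
    (hs.odometer_of_mem_canonTop_of_respectsArcs (hs.respectsArcs_odometer k) hv).1

theorem HasUniqueSource.exists_lt_mem_canonTop_of_arc (hs : F.HasUniqueSource T) {k : ℕ}
    (hv : v ∈ F.canonTop (F.phiTC T) k) (huv : F.Arc T u v) :
    ∃ m < k, u ∈ F.canonTop (F.phiTC T) m := by
  have hu := (hs.odometer_of_mem_canonTop_of_respectsArcs (hs.respectsArcs_odometer k) hv).2 u huv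
  exact odometer_pos_iff.1 (by omega)

theorem HasUniqueSource.mem_canonTop_succ_iff (hs : F.HasUniqueSource T) {k : ℕ} :
    v ∈ F.canonTop (F.phiTC T) (k + 1) ↔ v ≠ 0 ∧ (v ∈ F.rows ↔ ¬Even k) ∧
      (∀ m ≤ k, v ∉ F.canonTop (F.phiTC T) m) ∧
        ∀ u, F.Arc T u v → ∃ m ≤ k, u ∈ F.canonTop (F.phiTC T) m := by
  rw [mem_canonTop_succ]
  refine and_congr_right fun hv => and_congr_right fun _ => ?_
  have ht := hs.respectsArcs_odometer (k + 1)
  have hone : ∀ u, F.odometer (F.phiTC T) (k + 1) u = 1 ↔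
      0 < F.odometer (F.phiTC T) (k + 1) u := fun u => by
    have := ht.le_one u
    omega
  simp only [hs.deg_le_canonConfig_iff ht hv, hone, odometer_pos_iff, odometer_eq_zero_iff,
    Nat.lt_succ_iff]

/-! ### Levels -/

theorem mem_canonTop_level (hv : ∃ k, v ∈ F.canonTop (F.phiTC T) k) :
    v ∈ F.canonTop (F.phiTC T) (F.level T v) :=
  Nat.sInf_mem hv

theorem level_le_of_mem_canonTop {k : ℕ} (hv : v ∈ F.canonTop (F.phiTC T) k) :
    F.level T v ≤ k :=
  Nat.sInf_le hv

theorem HasUniqueSource.exists_arc_mem_canonTop_succ (hs : F.HasUniqueSource T) (hv : v ≠ 0)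
    (hin : ∀ u, F.Arc T u v → ∃ k, u ∈ F.canonTop (F.phiTC T) k) :
    ∃ u k, F.Arc T u v ∧ u ∈ F.canonTop (F.phiTC T) k ∧ v ∈ F.canonTop (F.phiTC T) (k + 1) := by
  obtain ⟨u, huv, hmax⟩ : ∃ u, F.Arc T u v ∧ ∀ w, F.Arc T w v → F.level T w ≤ F.level T u :=
    Set.exists_max_image {u | F.Arc T u v} (F.level T) (Set.toFinite _) ((hs v).2 hv)
  have hu := mem_canonTop_level (hin u huv)
  refine ⟨u, F.level T u, huv, hu, hs.mem_canonTop_succ_iff.2 ⟨hv, ?_, fun m hm hvm => ?_, ?_⟩⟩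
  · rw [← mem_rows_iff_even_of_mem_canonTop hu, huv.mem_rows_iff, not_not]
  · obtain ⟨l, hl, hul⟩ := hs.exists_lt_mem_canonTop_of_arc hvm huv
    exact absurd (level_le_of_mem_canonTop hul) (by omega)
  · exact fun w hw => ⟨F.level T w, hmax w hw, mem_canonTop_level (hin w hw)⟩

theorem HasUniqueSource.exists_mem_canonTop (hs : F.HasUniqueSource T)
    (hwf : WellFounded (F.Arc T)) (v : Fin (n + 1)) : ∃ k, v ∈ F.canonTop (F.phiTC T) k := by
  induction v using hwf.induction with
  | _ v ih =>
    by_cases hv : v = 0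
    · exact ⟨0, hv⟩
    · obtain ⟨-, k, -, -, hvk⟩ := hs.exists_arc_mem_canonTop_succ hv ih
      exact ⟨k + 1, hvk⟩

theorem HasUniqueSource.mem_canonTop_iff (hs : F.HasUniqueSource T) (hwf : WellFounded (F.Arc T))
    {k : ℕ} : v ∈ F.canonTop (F.phiTC T) k ↔ F.level T v = k := by
  have hlevel := mem_canonTop_level (hs.exists_mem_canonTop hwf v)
  refine ⟨fun hv => ?_, fun h => h ▸ hlevel⟩
  by_contra hne
  exact hs.notMem_canonTop_of_lt ((level_le_of_mem_canonTop hv).lt_of_ne hne) hv hlevel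

theorem HasUniqueSource.level_eq_zero_iff (hs : F.HasUniqueSource T)
    (hwf : WellFounded (F.Arc T)) : F.level T v = 0 ↔ v = 0 :=
  (hs.mem_canonTop_iff hwf).symm.trans mem_canonTop_zero

theorem HasUniqueSource.mem_rows_iff_even_level (hs : F.HasUniqueSource T)
    (hwf : WellFounded (F.Arc T)) : v ∈ F.rows ↔ Even (F.level T v) :=
  mem_rows_iff_even_of_mem_canonTop (mem_canonTop_level (hs.exists_mem_canonTop hwf v))

theorem HasUniqueSource.level_lt_of_arc (hs : F.HasUniqueSource T) (hwf : WellFounded (F.Arc T))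
    (huv : F.Arc T u v) : F.level T u < F.level T v := by
  obtain ⟨m, hm, hu⟩ := hs.exists_lt_mem_canonTop_of_arc ((hs.mem_canonTop_iff hwf).2 rfl) huv
  exact (level_le_of_mem_canonTop hu).trans_lt hm

theorem HasUniqueSource.arc_iff_level_lt (hs : F.HasUniqueSource T) (hwf : WellFounded (F.Arc T))
    (hadj : F.Adj u v) : F.Arc T u v ↔ F.level T u < F.level T v :=
  ⟨hs.level_lt_of_arc hwf, fun hlt =>
    (adj_iff_arc_or_arc.1 hadj).resolve_right fun hvu => hlt.not_gt (hs.level_lt_of_arc hwf hvu)⟩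

theorem HasUniqueSource.exists_arc_level_add_one_eq (hs : F.HasUniqueSource T)
    (hwf : WellFounded (F.Arc T)) (hv : v ≠ 0) :
    ∃ u, F.Arc T u v ∧ F.level T u + 1 = F.level T v := by
  obtain ⟨u, k, huv, hu, hvk⟩ :=
    hs.exists_arc_mem_canonTop_succ hv fun w _ => hs.exists_mem_canonTop hwf w
  rw [hs.mem_canonTop_iff hwf] at hu hvk
  exact ⟨u, huv, by rw [hu, hvk]⟩

theorem HasUniqueSource.exists_level_eq_of_le (hs : F.HasUniqueSource T)
    (hwf : WellFounded (F.Arc T)) {m : ℕ} (hm : m ≤ F.level T v) : ∃ u, F.level T u = m := by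
  induction hm using Nat.decreasingInduction with
  | self => exact ⟨v, rfl⟩
  | of_succ k _ ih =>
    obtain ⟨w, hw⟩ := ih
    have hw0 : w ≠ 0 := (hs.level_eq_zero_iff hwf).not.1 (by omega)
    obtain ⟨u, -, hu⟩ := hs.exists_arc_level_add_one_eq hwf hw0
    exact ⟨u, by omega⟩

/-! ### Cornersupport entries -/

-- Levels of adjacent vertices differ by an odd amount, so a gap greater than one is at least three
-- and leaves room for two intermediate levels.
theorem HasUniqueSource.exists_level_lt_level_lt_iff (hs : F.HasUniqueSource T)
    (hwf : WellFounded (F.Arc T)) (huv : F.Arc T u v) :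
    (∃ x y, (x ∈ F.rows ↔ v ∈ F.rows) ∧ (y ∈ F.rows ↔ u ∈ F.rows) ∧ F.level T u < F.level T x ∧
      F.level T x < F.level T y ∧ F.level T y < F.level T v) ↔
      F.level T u + 1 ≠ F.level T v := by
  refine ⟨?_, fun hne => ?_⟩
  · rintro ⟨x, y, -, -, hux, hxy, hyv⟩
    omega
  have hlt := hs.level_lt_of_arc hwf huv
  have hparity := huv.mem_rows_iff
  simp only [hs.mem_rows_iff_even_level hwf, Nat.even_iff] at hparity ⊢
  obtain ⟨x, hx⟩ := hs.exists_level_eq_of_le hwf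
    (show F.level T u + 1 ≤ F.level T v by omega)
  obtain ⟨y, hy⟩ := hs.exists_level_eq_of_le hwf
    (show F.level T u + 2 ≤ F.level T v by omega)
  exact ⟨x, y, by omega, by omega, by omega, by omega, by omega⟩

theorem suppS_eq_true_iff {i j : Fin (n + 1)} :
    F.suppS T i j = true ↔ F.level T i < F.level T j := by
  simp [suppS, level]

theorem HasUniqueSource.suppS_eq_false_iff (hs : F.HasUniqueSource T)
    (hwf : WellFounded (F.Arc T)) {i j : Fin (n + 1)} (hi : i ∈ F.rows) (hj : j ∉ F.rows) :
    F.suppS T i j = false ↔ F.level T j < F.level T i := by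
  rw [hs.mem_rows_iff_even_level hwf, Nat.even_iff] at hi hj
  rw [← Bool.not_eq_true, suppS_eq_true_iff]
  omega

theorem HasUniqueSource.not_cornersupport_iff_of_eq_true (hs : F.HasUniqueSource T)
    (hwf : WellFounded (F.Arc T)) {i j : Fin (n + 1)} (hij : F.Cell i j) (ht : T i j = true) :
    ¬F.Cornersupport T i j ↔ F.level T i + 1 = F.level T j := by
  rw [not_iff_comm, ← Ne, ← hs.exists_level_lt_level_lt_iff hwf (Or.inl ⟨hij, ht⟩)]
  simp only [Cornersupport, ht, Bool.not_true, suppS_eq_true_iff, hij.1, hij.2.1, iff_true,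
    iff_false]
  constructor
  · rintro ⟨x, y, hx, hy, hix, hxy, hyj⟩
    exact ⟨y, x, hy, hx, by rintro rfl; omega, by rintro rfl; omega,
      (hs.suppS_eq_false_iff hwf hy hx).2 hxy, hyj, hix⟩
  · rintro ⟨y, x, hy, hx, -, -, hxy, hyj, hix⟩
    exact ⟨x, y, hx, hy, hix, (hs.suppS_eq_false_iff hwf hy hx).1 hxy, hyj⟩

theorem HasUniqueSource.not_cornersupport_iff_of_eq_false (hs : F.HasUniqueSource T)
    (hwf : WellFounded (F.Arc T)) {i j : Fin (n + 1)} (hij : F.Cell i j) (ht : T i j = false) :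
    ¬F.Cornersupport T i j ↔ F.level T j + 1 = F.level T i := by
  rw [not_iff_comm, ← Ne, ← hs.exists_level_lt_level_lt_iff hwf (Or.inr ⟨hij, ht⟩)]
  simp only [Cornersupport, ht, Bool.not_false, suppS_eq_true_iff, hij.1, hij.2.1, iff_true,
    iff_false]
  constructor
  · rintro ⟨x, y, hx, hy, hjx, hxy, hyi⟩
    exact ⟨x, y, hx, hy, by rintro rfl; omega, by rintro rfl; omega, hxy,
      (hs.suppS_eq_false_iff hwf hx hij.2.1).2 hjx, (hs.suppS_eq_false_iff hwf hij.1 hy).2 hyi⟩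
  · rintro ⟨x, y, hx, hy, -, -, hxy, hjx, hyi⟩
    exact ⟨x, y, hx, hy, (hs.suppS_eq_false_iff hwf hx hij.2.1).1 hjx, hxy,
      (hs.suppS_eq_false_iff hwf hij.1 hy).1 hyi⟩

theorem HasUniqueSource.nu_eq_ncard_arc (hs : F.HasUniqueSource T)
    (hwf : WellFounded (F.Arc T)) (v : Fin (n + 1)) :
    F.nu T v = {u | F.Arc T u v ∧ F.level T u + 1 = F.level T v}.ncard := by
  rw [nu]
  split_ifs with hv <;> congr 1 <;> ext u
  · simp only [Set.mem_ofPred_eq, arc_iff_of_mem_rows hv, and_assoc]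
    exact and_congr_right fun hc => and_congr_right fun ht =>
      hs.not_cornersupport_iff_of_eq_false hwf hc ht
  · simp only [Set.mem_ofPred_eq, arc_iff_of_notMem_rows hv, and_assoc]
    exact and_congr_right fun hc => and_congr_right fun ht =>
      hs.not_cornersupport_iff_of_eq_true hwf hc ht

theorem HasUniqueSource.arc_and_level_add_one_eq_iff (hs : F.HasUniqueSource T)
    (hwf : WellFounded (F.Arc T)) :
    F.Arc T u v ∧ F.level T u + 1 = F.level T v ↔
      (if v ∈ F.rows then v < u else u < v) ∧ F.level T u + 1 = F.level T v := by
  refine and_congr_left fun hlevel => ?_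
  have hparity : u ∈ F.rows ↔ v ∉ F.rows := by
    rw [hs.mem_rows_iff_even_level hwf, hs.mem_rows_iff_even_level hwf, ← hlevel,
      Nat.even_add_one, not_not]
  have hadj : F.Adj u v ↔ if v ∈ F.rows then v < u else u < v := by
    unfold Adj Cell
    split_ifs with hv <;> simp [hparity, hv]
  rw [← hadj]
  exact ⟨fun huv => adj_iff_arc_or_arc.2 (Or.inl huv), fun h =>
    (hs.arc_iff_level_lt hwf h).2 (by omega)⟩

theorem HasUniqueSource.mu_phiTC_eq_ncard_arc (hs : F.HasUniqueSource T)
    (hwf : WellFounded (F.Arc T)) (hv : v ≠ 0) :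
    F.mu (F.phiTC T) v = {u | F.Arc T u v ∧ F.level T u + 1 = F.level T v}.ncard := by
  have hpos : F.level T v ≠ 0 := (hs.level_eq_zero_iff hwf).not.2 hv
  have hpred : ∀ u, u ∈ F.canonTop (F.phiTC T) (F.bIdx (F.phiTC T) v - 1) ↔
      F.level T u + 1 = F.level T v := fun u => by
    rw [← level, hs.mem_canonTop_iff hwf]
    omega
  simp only [hs.arc_and_level_add_one_eq_iff hwf, mu, hpred]
  split_ifs <;> rfl

/-! ### The orientation of an EW-tableau -/

theorem IsEW.hasUniqueSource (hT : F.IsEW T) : F.HasUniqueSource T := by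
  obtain ⟨-, htop, hrow, -⟩ := hT
  intro v
  constructor
  · rintro ⟨u, huv⟩ rfl
    obtain ⟨hcell, hu⟩ := (arc_iff_of_mem_rows F.zero_mem).1 huv
    simp [htop u hcell] at hu
  · intro hv
    by_cases h : v ∈ F.rows
    · exact (hrow v h hv).imp fun _ => Or.inr
    · have hcell : F.Cell 0 v := ⟨F.zero_mem, h, Fin.pos_of_ne_zero hv⟩
      exact ⟨0, Or.inl ⟨hcell, htop v hcell⟩⟩

theorem IsEW.arc_of_arc_of_arc_of_arc (hT : F.IsEW T) {r k i j : Fin (n + 1)} (hr : r ∈ F.rows)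
    (hri : r < i) (hrk : F.Arc T r k) (hki : F.Arc T k i) (hij : F.Arc T i j) : F.Arc T r j := by
  have hk : k ∉ F.rows := hrk.mem_rows_iff.1 hr
  have hi : i ∈ F.rows := by
    by_contra hi
    exact hk (hki.mem_rows_iff.2 hi)
  have hj : j ∉ F.rows := hij.mem_rows_iff.1 hi
  rw [arc_iff_of_notMem_rows hk] at hrk
  rw [arc_iff_of_mem_rows hi] at hki
  rw [arc_iff_of_notMem_rows hj] at hij ⊢
  have hcell : F.Cell r j := ⟨hr, hj, hri.trans hij.1.2.2⟩
  have hrect := hT.2.2.2 i r j k hij.1 hki.1 hcell hrk.1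
  rw [hij.2, hki.2, hrk.2] at hrect
  refine ⟨hcell, ?_⟩
  by_contra hrj
  exact absurd (hrect rfl (Bool.eq_false_of_not_eq_true hrj).symm) Bool.noConfusion

theorem IsEW.exists_erase_forall_exists_arc (hT : F.IsEW T) {X : Finset (Fin (n + 1))}
    (hne : X.Nonempty) (hX : ∀ v ∈ X, ∃ u ∈ X, F.Arc T u v) :
    ∃ i ∈ X, (X.erase i).Nonempty ∧ ∀ v ∈ X.erase i, ∃ u ∈ X.erase i, F.Arc T u v := by
  have hrow : {i ∈ X | i ∈ F.rows}.Nonempty := by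
    obtain ⟨v, hv⟩ := hne
    obtain ⟨u, hu, huv⟩ := hX v hv
    by_cases h : v ∈ F.rows
    · exact ⟨v, Finset.mem_filter.2 ⟨hv, h⟩⟩
    · exact ⟨u, Finset.mem_filter.2 ⟨hu, huv.mem_rows_iff.2 h⟩⟩
  obtain ⟨i, hi, hmax⟩ := Finset.exists_max_image _ id hrow
  simp only [Finset.mem_filter, id] at hi hmax
  obtain ⟨k, hkX, hki⟩ := hX i hi.1
  obtain ⟨r, hrX, hrk⟩ := hX k hkX
  have hr : r ∈ F.rows := hrk.mem_rows_iff.2 fun hk => hki.mem_rows_iff.1 hk hi.2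
  have hri : r ≠ i := fun h => hki.asymm (h ▸ hrk)
  have hr' : r ∈ X.erase i := Finset.mem_erase.2 ⟨hri, hrX⟩
  refine ⟨i, hi.1, ⟨r, hr'⟩, fun v hv => ?_⟩
  obtain ⟨u, hu, huv⟩ := hX v (Finset.mem_of_mem_erase hv)
  by_cases hui : u = i
  · subst hui
    exact ⟨r, hr', hT.arc_of_arc_of_arc_of_arc hr ((hmax r ⟨hrX, hr⟩).lt_of_ne hri) hrk hki huv⟩
  · exact ⟨u, Finset.mem_erase.2 ⟨hui, hu⟩, huv⟩

theorem IsEW.wellFounded_arc (hT : F.IsEW T) : WellFounded (F.Arc T) := by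
  have hempty : ∀ X : Finset (Fin (n + 1)), (∀ v ∈ X, ∃ u ∈ X, F.Arc T u v) → X = ∅ := by
    intro X
    induction X using Finset.strongInduction with
    | H X ih =>
      intro hX
      by_contra hne
      obtain ⟨i, hi, herase, hclosed⟩ :=
        hT.exists_erase_forall_exists_arc (Finset.nonempty_iff_ne_empty.2 hne) hX
      exact herase.ne_empty (ih _ (Finset.erase_ssubset hi) hclosed)
  rw [WellFounded.wellFounded_iff_has_min]
  intro s hs
  by_contra! hmin
  refine hs.ne_empty ?_
  have := hempty s.toFinset (by simpa using hmin)
  simpa using this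

end

end Ferrers

/-- For every EW-tableau `T` on `F` and every non-sink vertex `j`,
`ν_j(T) = μ_j(φ_TC T)`. -/
theorem nu_eq_mu {n : ℕ} (F : Ferrers n)
    (T : Fin (n + 1) → Fin (n + 1) → Bool) (hT : F.IsEW T) :
    ∀ j : Fin (n + 1), j ≠ 0 → F.nu T j = F.mu (F.phiTC T) j := by
  intro j hj
  rw [hT.hasUniqueSource.nu_eq_ncard_arc hT.wellFounded_arc,
    hT.hasUniqueSource.mu_phiTC_eq_ncard_arc hT.wellFounded_arc hj]
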